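/- arXiv:2504.08382 — 5 statements merged into one kernel-verified Lean document; each statement's English description precedes it below -/
import Mathlib

section
/- Let T > 0, let y : [0, T] → ℝ be continuous, nonnegative, and differentiable on (0, T), and let p, a, g : [0, T] → ℝ be continuous nonnegative functions such that y′(t) + p(t) ≤ g(t)·y(t) + a(t) for every t ∈ (0, T). Then for every t ∈ [0, T]: (sup over s ∈ [0, t] of y(s)) + ∫₀ᵗ p(s) ds ≤ 2·exp(∫₀ᵗ g(s) ds)·(y(0) + ∫₀ᵗ a(s) ds). -/
theorem aux_prim (T : ℝ) (f : ℝ → ℝ) (hf : ContinuousOn f (Set.Icc 0 T))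
    (h0 : ∀ t ∈ Set.Icc (0 : ℝ) T, 0 ≤ f t) :
    ContinuousOn (fun t => ∫ s in (0 : ℝ)..t, f s) (Set.Icc 0 T) ∧
    (∀ t ∈ Set.Ioo (0 : ℝ) T, HasDerivAt (fun t => ∫ s in (0 : ℝ)..t, f s) (f t) t) ∧
    (∀ t ∈ Set.Icc (0 : ℝ) T, 0 ≤ ∫ s in (0 : ℝ)..t, f s) ∧
    (∀ t ∈ Set.Icc (0 : ℝ) T, ∀ s ∈ Set.Icc (0 : ℝ) t,
      ∫ s in (0 : ℝ)..s, f s ≤ ∫ s in (0 : ℝ)..t, f s) := by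
  have hii : ∀ u ∈ Set.Icc (0 : ℝ) T, ∀ v ∈ Set.Icc (0 : ℝ) T,
      IntervalIntegrable f MeasureTheory.volume u v := by
    intro u hu v hv
    apply ContinuousOn.intervalIntegrable
    exact hf.mono (Set.uIcc_subset_Icc hu hv)
  refine ⟨?_, ?_, ?_, ?_⟩
  · have hi : MeasureTheory.IntegrableOn f (Set.Icc 0 T) MeasureTheory.volume := hf.integrableOn_Icc
    exact (intervalIntegral.continuousOn_primitive_Icc hi).congr (by
      intro x hx
      simp only
      rw [intervalIntegral.integral_of_le hx.1, MeasureTheory.integral_Icc_eq_integral_Ioc])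
  · intro t ht
    have hn : Set.Icc (0 : ℝ) T ∈ nhds t := Icc_mem_nhds ht.1 ht.2
    apply intervalIntegral.integral_hasDerivAt_right
    · exact hii 0 ⟨le_rfl, by linarith [ht.1, ht.2]⟩ t ⟨ht.1.le, ht.2.le⟩
    · exact ⟨_, hn, hf.aestronglyMeasurable measurableSet_Icc⟩
    · exact hf.continuousAt hn
  · intro t ht
    apply intervalIntegral.integral_nonneg ht.1
    intro u hu
    exact h0 u ⟨hu.1, hu.2.trans ht.2⟩
  · intro t ht s hs
    have hsT : s ∈ Set.Icc (0 : ℝ) T := ⟨hs.1, hs.2.trans ht.2⟩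
    have h00 : (0 : ℝ) ∈ Set.Icc (0 : ℝ) T := ⟨le_rfl, ht.1.trans ht.2⟩
    rw [← intervalIntegral.integral_add_adjacent_intervals (hii 0 h00 s hsT) (hii s hsT t ht)]
    have : 0 ≤ ∫ u in s..t, f u := by
      apply intervalIntegral.integral_nonneg hs.2
      intro u hu
      exact h0 u ⟨hs.1.trans hu.1, hu.2.trans ht.2⟩
    linarith

/-- Grönwall-type inequality with a dissipation term (used in Theorems 4.1 and 5.1):
if `y' + p ≤ g·y + a` on `(0,T)` with `y, p, a, g` continuous and nonnegative, then
`sup_{[0,t]} y + ∫₀ᵗ p ≤ 2 exp(∫₀ᵗ g) (y(0) + ∫₀ᵗ a)` for all `t ∈ [0,T]`. -/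
theorem stmt1 (T : ℝ) (hT : 0 < T) (y y' p a g : ℝ → ℝ)
    (hy_cont : ContinuousOn y (Set.Icc 0 T))
    (hy_nonneg : ∀ t ∈ Set.Icc (0 : ℝ) T, 0 ≤ y t)
    (hy_deriv : ∀ t ∈ Set.Ioo (0 : ℝ) T, HasDerivAt y (y' t) t)
    (hp_cont : ContinuousOn p (Set.Icc 0 T))
    (hp_nonneg : ∀ t ∈ Set.Icc (0 : ℝ) T, 0 ≤ p t)
    (ha_cont : ContinuousOn a (Set.Icc 0 T))
    (ha_nonneg : ∀ t ∈ Set.Icc (0 : ℝ) T, 0 ≤ a t)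
    (hg_cont : ContinuousOn g (Set.Icc 0 T))
    (hg_nonneg : ∀ t ∈ Set.Icc (0 : ℝ) T, 0 ≤ g t)
    (hineq : ∀ t ∈ Set.Ioo (0 : ℝ) T, y' t + p t ≤ g t * y t + a t) :
    ∀ t ∈ Set.Icc (0 : ℝ) T,
      sSup (y '' Set.Icc 0 t) + (∫ s in (0 : ℝ)..t, p s) ≤
        2 * Real.exp (∫ s in (0 : ℝ)..t, g s) * (y 0 + ∫ s in (0 : ℝ)..t, a s) := by
  obtain ⟨cP, dP, nP, mP⟩ := aux_prim T p hp_cont hp_nonneg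
  obtain ⟨cA, dA, nA, mA⟩ := aux_prim T a ha_cont ha_nonneg
  obtain ⟨cG, dG, nG, mG⟩ := aux_prim T g hg_cont hg_nonneg
  have z : ∀ f : ℝ → ℝ, (∫ s in (0 : ℝ)..0, f s) = 0 := fun f => by simp
  have zP := z p
  have zA := z a
  have zG := z g
  have key : ∀ P A G : ℝ → ℝ, P 0 = 0 → A 0 = 0 → G 0 = 0 →
      ContinuousOn P (Set.Icc 0 T) → ContinuousOn A (Set.Icc 0 T) →
      ContinuousOn G (Set.Icc 0 T) →
      (∀ t ∈ Set.Ioo (0 : ℝ) T, HasDerivAt P (p t) t) →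
      (∀ t ∈ Set.Ioo (0 : ℝ) T, HasDerivAt A (a t) t) →
      (∀ t ∈ Set.Ioo (0 : ℝ) T, HasDerivAt G (g t) t) →
      (∀ t ∈ Set.Icc (0 : ℝ) T, 0 ≤ P t) →
      (∀ t ∈ Set.Icc (0 : ℝ) T, 0 ≤ G t) →
      ∀ t ∈ Set.Icc (0 : ℝ) T, y t + P t ≤ Real.exp (G t) * (y 0 + A t) := by
    intro P A G zP zA zG cP cA cG dP dA dG nP nG t ht
    have hd : ∀ t ∈ Set.Ioo (0 : ℝ) T,
        HasDerivAt (fun t => Real.exp (-G t) * (y t + P t) - A t)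
          ((Real.exp (-G t) * (-g t)) * (y t + P t) + Real.exp (-G t) * (y' t + p t) - a t) t :=
      fun t ht => (((dG t ht).neg.exp).mul ((hy_deriv t ht).add (dP t ht))).sub (dA t ht)
    have hanti : AntitoneOn (fun t => Real.exp (-G t) * (y t + P t) - A t) (Set.Icc 0 T) := by
      apply antitoneOn_of_deriv_nonpos (convex_Icc 0 T)
      · exact ((cG.neg.rexp).mul (hy_cont.add cP)).sub cA
      · rw [interior_Icc]
        exact fun t ht => (hd t ht).differentiableAt.differentiableWithinAt
      · rw [interior_Icc]
        intro t ht
        rw [(hd t ht).deriv]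
        have ht' := Set.Ioo_subset_Icc_self ht
        have e0 := Real.exp_pos (-G t)
        have e1 : Real.exp (-G t) ≤ 1 := Real.exp_le_one_iff.2 (by linarith [nG t ht'])
        have h1 := mul_le_mul_of_nonneg_left (hineq t ht) e0.le
        have h2 := mul_nonneg e0.le (mul_nonneg (hg_nonneg t ht') (nP t ht'))
        have h3 := mul_le_mul_of_nonneg_right e1 (ha_nonneg t ht')
        nlinarith
    have h := hanti (Set.left_mem_Icc.2 hT.le) ht ht.1
    simp only [zP, zA, zG, neg_zero, Real.exp_zero] at h
    have h' : Real.exp (-G t) * (y t + P t) ≤ y 0 + A t := by linarith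
    have h2 := mul_le_mul_of_nonneg_left h' (Real.exp_pos (G t)).le
    rwa [← mul_assoc, ← Real.exp_add, add_neg_cancel, Real.exp_zero, one_mul] at h2
  have K := key (fun t => ∫ s in (0 : ℝ)..t, p s) (fun t => ∫ s in (0 : ℝ)..t, a s)
    (fun t => ∫ s in (0 : ℝ)..t, g s) zP zA zG cP cA cG dP dA dG nP nG
  intro t ht
  have y0 := hy_nonneg 0 (Set.left_mem_Icc.2 hT.le)
  have hs : sSup (y '' Set.Icc 0 t) ≤
      Real.exp (∫ s in (0 : ℝ)..t, g s) * (y 0 + ∫ s in (0 : ℝ)..t, a s) := by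
    apply csSup_le
    · exact (Set.nonempty_Icc.2 ht.1).image _
    · rintro _ ⟨s, hs, rfl⟩
      have hsT : s ∈ Set.Icc (0 : ℝ) T := ⟨hs.1, hs.2.trans ht.2⟩
      have h1 := K s hsT
      have h2 := nP s hsT
      have h3 : Real.exp (∫ s in (0 : ℝ)..s, g s) * (y 0 + ∫ s in (0 : ℝ)..s, a s) ≤
          Real.exp (∫ s in (0 : ℝ)..t, g s) * (y 0 + ∫ s in (0 : ℝ)..t, a s) := by
        apply mul_le_mul (Real.exp_le_exp.2 (mG t ht s hs)) (by linarith [mA t ht s hs])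
          (by linarith [nA s hsT]) (Real.exp_pos _).le
      linarith
  have h1 := K t ht
  have h2 := hy_nonneg t ht
  linarith
end

section
/- Fix a dimension d ≥ 1 and real numbers α and κ. Let η : ℝ^d → ℝ be twice continuously differentiable, let c : ℝ^d → ℝ^d be a continuously differentiable vector field, let δ : ℝ^d → ℝ be continuous, and let w : ℝ^d → ℝ be continuously differentiable with compact support. Set ω := exp(−α·η), b := c − α·κ·∇η, and E := α·(∇η)·b − div b. Then ∫_{ℝ^d} [ κ·∇w·∇(ω·w) + (c·∇w)·ω·w + δ·ω·w² ] dx = ∫_{ℝ^d} [ κ·ω·|∇w|² + (δ + E/2)·ω·w² ] dx. -/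
open scoped RealInnerProductSpace
open MeasureTheory

/-- Divergence of a vector field on `ℝ^d`. -/
noncomputable def vdiv {d : ℕ} (F : EuclideanSpace ℝ (Fin d) → EuclideanSpace ℝ (Fin d))
    (x : EuclideanSpace ℝ (Fin d)) : ℝ :=
  ∑ i, fderiv ℝ F x (EuclideanSpace.single i 1) i

theorem aux_integral_fderiv {d : ℕ} (g : EuclideanSpace ℝ (Fin d) → ℝ) (hg : ContDiff ℝ 1 g)
    (hs : HasCompactSupport g) (v : EuclideanSpace ℝ (Fin d)) :
    Integrable (fun x => fderiv ℝ g x v) ∧ ∫ x, fderiv ℝ g x v = 0 := by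
  have hi : Integrable (fun x => fderiv ℝ g x v) :=
    ((hg.continuous_fderiv one_ne_zero).clm_apply continuous_const).integrable_of_hasCompactSupport
      (hs.fderiv_apply ℝ v)
  have hgi : Integrable g := hg.continuous.integrable_of_hasCompactSupport hs
  refine ⟨hi, ?_⟩
  have h := integral_mul_fderiv_eq_neg_fderiv_mul_of_integrable (μ := volume) (𝕜 := ℝ)
    (f := fun _ : EuclideanSpace ℝ (Fin d) => (1 : ℝ)) (g := g) (v := v)
    (by simp) (by simpa using hi) (by simpa using hgi)
    (fun x => by fun_prop) (fun x _ => hg.differentiable one_ne_zero x)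
  simpa using h

theorem aux_vdiv {d : ℕ} (F : EuclideanSpace ℝ (Fin d) → EuclideanSpace ℝ (Fin d))
    (hF : ContDiff ℝ 1 F) (hs : HasCompactSupport F) :
    Integrable (vdiv F) ∧ ∫ x, vdiv F x = 0 := by
  have key : ∀ i : Fin d, Integrable (fun x => fderiv ℝ F x (EuclideanSpace.single i 1) i) ∧
      ∫ x, fderiv ℝ F x (EuclideanSpace.single i 1) i = 0 := by
    intro i
    have hg : ContDiff ℝ 1 (fun x => F x i) :=
      (EuclideanSpace.proj (𝕜 := ℝ) i).contDiff.comp hF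
    have hgs : HasCompactSupport (fun x => F x i) :=
      hs.comp_left (g := fun y : EuclideanSpace ℝ (Fin d) => y i) rfl
    have h := aux_integral_fderiv _ hg hgs (EuclideanSpace.single i 1)
    have e : ∀ x, fderiv ℝ (fun x => F x i) x (EuclideanSpace.single i 1)
        = fderiv ℝ F x (EuclideanSpace.single i 1) i := by
      intro x
      have := ((EuclideanSpace.proj (𝕜 := ℝ) (ι := Fin d) i).hasFDerivAt.comp x
        (hF.differentiable one_ne_zero x).hasFDerivAt).fderiv
      exact congrArg (fun L => L (EuclideanSpace.single i 1)) this
    simpa only [e] using h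
  unfold vdiv
  refine ⟨integrable_finsetSum _ fun i _ => (key i).1, ?_⟩
  rw [integral_finsetSum _ fun i _ => (key i).1]
  exact Finset.sum_eq_zero fun i _ => (key i).2

theorem aux_vdiv_smul {d : ℕ} (f : EuclideanSpace ℝ (Fin d) → ℝ)
    (b : EuclideanSpace ℝ (Fin d) → EuclideanSpace ℝ (Fin d)) (x : EuclideanSpace ℝ (Fin d))
    (hf : DifferentiableAt ℝ f x) (hb : DifferentiableAt ℝ b x) :
    vdiv (fun y => f y • b y) x = f x * vdiv b x + fderiv ℝ f x (b x) := by
  have hx : b x = ∑ i, b x i • EuclideanSpace.single i (1 : ℝ) := by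
    ext j
    simp [Finset.sum_apply, Pi.single_apply]
  conv_rhs => rw [hx]
  unfold vdiv
  rw [fderiv_fun_smul hf hb, map_sum, Finset.mul_sum, ← Finset.sum_add_distrib]
  refine Finset.sum_congr rfl fun i _ => ?_
  simp [mul_comm]

/-- Coercivity identity of Lemma 3.1 in its interior (compactly supported) form:
`∫ κ ∇w·∇(ωw) + (c·∇w) ω w + δ ω w² = ∫ κ ω |∇w|² + (δ + E/2) ω w²`. -/
theorem stmt3 {d : ℕ} (hd : 1 ≤ d) (α κ : ℝ)
    (η : EuclideanSpace ℝ (Fin d) → ℝ) (hη : ContDiff ℝ 2 η)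
    (c : EuclideanSpace ℝ (Fin d) → EuclideanSpace ℝ (Fin d)) (hc : ContDiff ℝ 1 c)
    (δ : EuclideanSpace ℝ (Fin d) → ℝ) (hδ : Continuous δ)
    (w : EuclideanSpace ℝ (Fin d) → ℝ) (hw : ContDiff ℝ 1 w)
    (hwsupp : HasCompactSupport w)
    (ω : EuclideanSpace ℝ (Fin d) → ℝ) (hω : ω = fun x => Real.exp (-(α * η x)))
    (b : EuclideanSpace ℝ (Fin d) → EuclideanSpace ℝ (Fin d))
    (hb : b = fun x => c x - (α * κ) • gradient η x)
    (E : EuclideanSpace ℝ (Fin d) → ℝ)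
    (hE : E = fun x => α * ⟪gradient η x, b x⟫ - vdiv b x) :
    (∫ x : EuclideanSpace ℝ (Fin d),
        (κ * ⟪gradient w x, gradient (fun y => ω y * w y) x⟫ +
          ⟪c x, gradient w x⟫ * (ω x * w x) + δ x * ω x * w x ^ 2)) =
      ∫ x : EuclideanSpace ℝ (Fin d),
        (κ * ω x * ‖gradient w x‖ ^ 2 + (δ x + E x / 2) * ω x * w x ^ 2) := by
  have hηd : Differentiable ℝ η := hη.differentiable two_ne_zero
  have hwd : Differentiable ℝ w := hw.differentiable one_ne_zero
  have hgη : ContDiff ℝ 1 (gradient η) :=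
    (InnerProductSpace.toDual ℝ (EuclideanSpace ℝ (Fin d))).symm.contDiff.comp
      (hη.fderiv_right (m := 1) (by norm_num))
  have hgw : Continuous (gradient w) :=
    (InnerProductSpace.toDual ℝ (EuclideanSpace ℝ (Fin d))).symm.continuous.comp
      (hw.continuous_fderiv one_ne_zero)
  have hb1 : ContDiff ℝ 1 b := by
    rw [hb]; exact hc.sub (hgη.const_smul (α * κ))
  have hω1 : ContDiff ℝ 1 ω := by
    rw [hω]; exact ((contDiff_const.mul (hη.of_le (by norm_num))).neg).exp
  have hωd : Differentiable ℝ ω := hω1.differentiable one_ne_zero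
  have hgrad : ∀ (f : EuclideanSpace ℝ (Fin d) → ℝ) (x v : EuclideanSpace ℝ (Fin d)),
      fderiv ℝ f x v = ⟪gradient f x, v⟫ := by
    intro f x v
    simp [gradient]
  have hfω : ∀ x, fderiv ℝ ω x = (-(α * ω x)) • fderiv ℝ η x := by
    intro x
    rw [hω]
    have := (((hηd x).hasFDerivAt.const_mul α).neg.exp).fderiv
    refine this.trans ?_
    ext v
    simp
    ring
  have hφ1 : ContDiff ℝ 1 (fun y => ω y * w y ^ 2) := hω1.mul (hw.pow 2)
  have hF1 : ContDiff ℝ 1 (fun y => (ω y * w y ^ 2) • b y) := hφ1.smul hb1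
  have hFs : HasCompactSupport (fun y => (ω y * w y ^ 2) • b y) := by
    refine hwsupp.mono ?_
    intro x hx h0
    apply hx
    simp [h0]
  obtain ⟨hDi, hD0⟩ := aux_vdiv _ hF1 hFs
  have hvb : Continuous (vdiv b) := by
    unfold vdiv
    refine continuous_finsetSum _ fun i _ => ?_
    exact (EuclideanSpace.proj (𝕜 := ℝ) (ι := Fin d) i).continuous.comp
      ((hb1.continuous_fderiv one_ne_zero).clm_apply continuous_const)
  have hEc : Continuous E := by
    rw [hE]
    exact (continuous_const.mul (hgη.continuous.inner hb1.continuous)).sub hvb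
  have hRi : Integrable (fun x => κ * ω x * ‖gradient w x‖ ^ 2 +
      (δ x + E x / 2) * ω x * w x ^ 2) := by
    have hωc := hω1.continuous
    have hwc := hw.continuous
    refine Continuous.integrable_of_hasCompactSupport (by fun_prop) ?_
    refine HasCompactSupport.intro' hwsupp (isClosed_tsupport w) ?_
    intro x hx
    have h1 : w x = 0 := image_eq_zero_of_notMem_tsupport hx
    have h2 : fderiv ℝ w x = 0 := by
      by_contra h
      exact hx (support_fderiv_subset ℝ h)
    simp [h1, gradient, h2]
  have hfφ : ∀ x v, fderiv ℝ (fun y => ω y * w y ^ 2) x v =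
      2 * ω x * w x * ⟪gradient w x, v⟫ - α * ω x * w x ^ 2 * ⟪gradient η x, v⟫ := by
    intro x v
    have := ((hωd x).hasFDerivAt.mul ((hwd x).hasFDerivAt.pow 2)).fderiv
    rw [← hgrad, ← hgrad]
    refine (congrArg (fun L => L v) this).trans ?_
    simp [hfω]
    ring
  have hpt : ∀ x, κ * ⟪gradient w x, gradient (fun y => ω y * w y) x⟫ +
          ⟪c x, gradient w x⟫ * (ω x * w x) + δ x * ω x * w x ^ 2 =
      (κ * ω x * ‖gradient w x‖ ^ 2 + (δ x + E x / 2) * ω x * w x ^ 2) +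
        1 / 2 * vdiv (fun y => (ω y * w y ^ 2) • b y) x := by
    intro x
    rw [aux_vdiv_smul _ _ x (hφ1.differentiable one_ne_zero x) (hb1.differentiable one_ne_zero x),
      hfφ, real_inner_comm]
    have h1 : ⟪gradient (fun y => ω y * w y) x, gradient w x⟫ =
        ω x * ‖gradient w x‖ ^ 2 - α * ω x * w x * ⟪gradient η x, gradient w x⟫ := by
      rw [← real_inner_self_eq_norm_sq, ← hgrad, ← hgrad w, ← hgrad η]
      refine (congrArg (fun L => L (gradient w x))
        ((hωd x).hasFDerivAt.mul (hwd x).hasFDerivAt).fderiv).trans ?_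
      simp [hfω]
      ring
    have h2 : ⟪gradient w x, b x⟫ =
        ⟪c x, gradient w x⟫ - α * κ * ⟪gradient η x, gradient w x⟫ := by
      rw [real_inner_comm, hb]
      simp only [inner_sub_left, real_inner_smul_left]
    have h3 : E x = α * ⟪gradient η x, b x⟫ - vdiv b x := by rw [hE]
    rw [h3, h2]
    first
      | rw [h1]; ring
      | rw [real_inner_comm, h1]; ring
  rw [integral_congr_ae (Filter.Eventually.of_forall hpt), integral_add hRi (hDi.const_mul _),
    integral_const_mul, hD0]
  simp
end

section
/- Fix a dimension d ≥ 1 and real numbers α and κ. Let η : ℝ^d → ℝ be twice continuously differentiable, let c : ℝ^d → ℝ^d be a continuously differentiable vector field, let δ : ℝ^d → ℝ be continuous, let w : ℝ^d → ℝ be continuously differentiable, and let v : ℝ^d → ℝ be continuously differentiable with compact support. Set ω := exp(−α·η), b := c − α·κ·∇η, and E := α·(∇η)·b − div b. Then ∫_{ℝ^d} [ κ·∇w·∇(ω·v) + (c·∇w)·ω·v + δ·w·ω·v ] dx = ∫_{ℝ^d} κ·ω·∇w·∇v dx + ∫_{ℝ^d} (δ + E)·ω·w·v dx − ∫_{ℝ^d}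 ω·w·(b·∇v) dx. -/
open scoped RealInnerProductSpace
open MeasureTheory

lemma aux_inner_grad {d : ℕ} (f : EuclideanSpace ℝ (Fin d) → ℝ) (x y : EuclideanSpace ℝ (Fin d)) :
    ⟪gradient f x, y⟫ = fderiv ℝ f x y := by
  simp [gradient]

lemma aux_div {d : ℕ} (f : EuclideanSpace ℝ (Fin d) → ℝ) (hf : ContDiff ℝ 1 f)
    (hs : HasCompactSupport f)
    (b : EuclideanSpace ℝ (Fin d) → EuclideanSpace ℝ (Fin d)) (hb : ContDiff ℝ 1 b) :
    ∫ x, (f x * vdiv b x + fderiv ℝ f x (b x)) = 0 := by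
  have hfc := hf.continuous
  have hbc := hb.continuous
  have hf' := hf.continuous_fderiv one_ne_zero
  have hb' := hb.continuous_fderiv one_ne_zero
  have hbi : ∀ i, ContDiff ℝ 1 (fun x => b x i) := fun i => by fun_prop
  have hbd : ∀ i x y, fderiv ℝ (fun x => b x i) x y = fderiv ℝ b x y i := by
    intro i x y
    have h := (hb.differentiable one_ne_zero x).hasFDerivAt
    have h2 := ((EuclideanSpace.proj (𝕜 := ℝ) i).hasFDerivAt (x := b x)).comp x h
    have h3 : HasFDerivAt (fun x => b x i)
      ((EuclideanSpace.proj (𝕜 := ℝ) i).comp (fderiv ℝ b x)) x := h2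
    rw [h3.fderiv]; rfl
  have key : ∀ x, f x * vdiv b x + fderiv ℝ f x (b x) =
      ∑ i, (f x * fderiv ℝ (fun x => b x i) x (EuclideanSpace.single i 1) +
        fderiv ℝ f x (EuclideanSpace.single i 1) * b x i) := by
    intro x
    rw [Finset.sum_add_distrib]
    congr 1
    · simp [vdiv, Finset.mul_sum, hbd]
    · have : b x = ∑ i, b x i • EuclideanSpace.single i (1:ℝ) := by
        ext j
        simp [Finset.sum_apply, Pi.single_apply]
      conv_lhs => rw [this]
      simp [map_sum, mul_comm]
  have i1 : ∀ i, Integrable (fun x => f x * fderiv ℝ (fun x => b x i) x (EuclideanSpace.single i 1)) := by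
    intro i
    have := (hbi i).continuous_fderiv one_ne_zero
    exact Continuous.integrable_of_hasCompactSupport (by fun_prop) hs.mul_right
  have i2 : ∀ i, Integrable (fun x => fderiv ℝ f x (EuclideanSpace.single i 1) * b x i) := by
    intro i
    exact Continuous.integrable_of_hasCompactSupport (by fun_prop)
      (hs.fderiv_apply ℝ _).mul_right
  have i3 : ∀ i, Integrable (fun x => f x * b x i) := by
    intro i
    exact Continuous.integrable_of_hasCompactSupport (by fun_prop) hs.mul_right
  simp_rw [key]
  have i4 : ∀ i, Integrable (fun x =>
      f x * fderiv ℝ (fun x => b x i) x (EuclideanSpace.single i 1) +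
        fderiv ℝ f x (EuclideanSpace.single i 1) * b x i) := fun i => (i1 i).add (i2 i)
  rw [integral_finsetSum _ fun i _ => i4 i]
  refine Finset.sum_eq_zero fun i _ => ?_
  rw [integral_add (i1 i) (i2 i), integral_mul_fderiv_eq_neg_fderiv_mul_of_integrable (i2 i) (i1 i)
    (i3 i) (fun x _ => hf.differentiable one_ne_zero x)
    (fun x _ => (hbi i).differentiable one_ne_zero x)]
  simp

/-- Equation (24) of the paper, in its interior form: the weighted
convection–diffusion–reaction bilinear form rewritten in terms of the full
effective reaction `M = δ + E` and the fitted convective term. -/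
theorem stmt4 {d : ℕ} (hd : 1 ≤ d) (α κ : ℝ)
    (η : EuclideanSpace ℝ (Fin d) → ℝ) (hη : ContDiff ℝ 2 η)
    (c : EuclideanSpace ℝ (Fin d) → EuclideanSpace ℝ (Fin d)) (hc : ContDiff ℝ 1 c)
    (δ : EuclideanSpace ℝ (Fin d) → ℝ) (hδ : Continuous δ)
    (w : EuclideanSpace ℝ (Fin d) → ℝ) (hw : ContDiff ℝ 1 w)
    (v : EuclideanSpace ℝ (Fin d) → ℝ) (hv : ContDiff ℝ 1 v)
    (hvsupp : HasCompactSupport v)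
    (ω : EuclideanSpace ℝ (Fin d) → ℝ) (hω : ω = fun x => Real.exp (-(α * η x)))
    (b : EuclideanSpace ℝ (Fin d) → EuclideanSpace ℝ (Fin d))
    (hb : b = fun x => c x - (α * κ) • gradient η x)
    (E : EuclideanSpace ℝ (Fin d) → ℝ)
    (hE : E = fun x => α * ⟪gradient η x, b x⟫ - vdiv b x) :
    (∫ x : EuclideanSpace ℝ (Fin d),
        (κ * ⟪gradient w x, gradient (fun y => ω y * v y) x⟫ +
          ⟪c x, gradient w x⟫ * (ω x * v x) + δ x * w x * ω x * v x)) =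
      (∫ x : EuclideanSpace ℝ (Fin d), κ * ω x * ⟪gradient w x, gradient v x⟫) +
        (∫ x : EuclideanSpace ℝ (Fin d), (δ x + E x) * ω x * w x * v x) -
        ∫ x : EuclideanSpace ℝ (Fin d), ω x * w x * ⟪b x, gradient v x⟫ := by
  have hgη : ContDiff ℝ 1 (gradient η) := by
    have : ContDiff ℝ 1 (fderiv ℝ η) := hη.fderiv_right (by norm_num)
    exact (InnerProductSpace.toDual ℝ _).symm.contDiff.comp this
  have hgw : Continuous (gradient w) :=
    (InnerProductSpace.toDual ℝ _).symm.continuous.comp (hw.continuous_fderiv one_ne_zero)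
  have hgv : Continuous (gradient v) :=
    (InnerProductSpace.toDual ℝ _).symm.continuous.comp (hv.continuous_fderiv one_ne_zero)
  have hgvs : HasCompactSupport (gradient v) :=
    (hvsupp.fderiv ℝ).comp_left (g := (InnerProductSpace.toDual ℝ _).symm) (map_zero _)
  have hη1 : ContDiff ℝ 1 η := hη.of_le (by norm_num)
  have hbC : ContDiff ℝ 1 b := by rw [hb]; fun_prop
  have hωC : ContDiff ℝ 1 ω := by rw [hω]; fun_prop
  have hdω : ∀ x, fderiv ℝ ω x = (-(α * ω x)) • fderiv ℝ η x := by
    intro x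
    have h : HasFDerivAt (fun x => Real.exp (-(α * η x)))
        (Real.exp (-(α * η x)) • -(α • fderiv ℝ η x)) x :=
      (((hη1.differentiable one_ne_zero x).hasFDerivAt.const_mul α).neg).exp
    rw [hω]
    rw [h.fderiv]
    ext y
    simp
    ring
  have hvd : Continuous (vdiv b) := by
    have := hbC.continuous_fderiv one_ne_zero
    unfold vdiv
    fun_prop
  have hbc := hbC.continuous
  have hωc := hωC.continuous
  have hwc := hw.continuous
  have hvc := hv.continuous
  have hgηc := hgη.continuous
  have hEc : Continuous E := by rw [hE]; fun_prop
  have hmain := aux_div (fun x => ω x * w x * v x) (by fun_prop) hvsupp.mul_left b hbC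
  have I1 : Integrable (fun x => κ * ω x * ⟪gradient w x, gradient v x⟫) := by
    refine Continuous.integrable_of_hasCompactSupport (by fun_prop) ?_
    refine hgvs.mono fun x hx h => hx ?_
    simp [h]
  have I2 : Integrable (fun x => (δ x + E x) * ω x * w x * v x) :=
    Continuous.integrable_of_hasCompactSupport (by fun_prop) hvsupp.mul_left
  have I3 : Integrable (fun x => ω x * w x * ⟪b x, gradient v x⟫) := by
    refine Continuous.integrable_of_hasCompactSupport (by fun_prop) ?_
    refine hgvs.mono fun x hx h => hx ?_
    simp [h]
  have I4 : Integrable (fun x => (ω x * w x * v x) * vdiv b x +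
      fderiv ℝ (fun x => ω x * w x * v x) x (b x)) := by
    have hC : ContDiff ℝ 1 (fun x => ω x * w x * v x) := by fun_prop
    have hC' := hC.continuous_fderiv one_ne_zero
    have hs : HasCompactSupport (fun x => ω x * w x * v x) := hvsupp.mul_left
    refine Continuous.integrable_of_hasCompactSupport (by fun_prop) ?_
    refine HasCompactSupport.add hs.mul_right ?_
    refine (hs.fderiv ℝ).mono fun x hx h => hx ?_
    simp [h]
  have I12 : Integrable (fun x => κ * ω x * ⟪gradient w x, gradient v x⟫ +
      (δ x + E x) * ω x * w x * v x) := I1.add I2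
  have I123 : Integrable (fun x => κ * ω x * ⟪gradient w x, gradient v x⟫ +
      (δ x + E x) * ω x * w x * v x - ω x * w x * ⟪b x, gradient v x⟫) := I12.sub I3
  rw [← integral_add I1 I2, ← integral_sub I12 I3]
  refine Eq.trans ?_ (add_zero _)
  rw [← hmain, ← integral_add I123 I4]
  refine integral_congr_ae (Filter.Eventually.of_forall fun x => ?_)
  have dω := hωC.differentiable one_ne_zero x
  have dw := hw.differentiable one_ne_zero x
  have dv := hv.differentiable one_ne_zero x
  have e1 : fderiv ℝ (fun x => ω x * w x * v x) x (b x) =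
      ω x * w x * fderiv ℝ v x (b x) + v x * (ω x * fderiv ℝ w x (b x) +
        w x * (-(α * ω x) * fderiv ℝ η x (b x))) := by
    rw [fderiv_fun_mul (dω.fun_mul dw) dv, fderiv_fun_mul dω dw, hdω]
    simp
    ring
  have e2 : ⟪gradient w x, gradient (fun y => ω y * v y) x⟫ =
      ω x * ⟪gradient w x, gradient v x⟫ + v x * (-(α * ω x) * ⟪gradient w x, gradient η x⟫) := by
    simp only [real_inner_comm _ (gradient w x), aux_inner_grad]
    rw [fderiv_fun_mul dω dv, hdω]
    simp
  have e3 : fderiv ℝ w x (b x) = ⟪c x, gradient w x⟫ - α * κ * ⟪gradient w x, gradient η x⟫ := by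
    rw [← aux_inner_grad, hb]
    simp only [inner_sub_right, inner_smul_right]
    rw [real_inner_comm (c x)]
  have e4 : E x = α * fderiv ℝ η x (b x) - vdiv b x := by
    rw [hE]; simp only [aux_inner_grad]
  have e5 : ⟪b x, gradient v x⟫ = fderiv ℝ v x (b x) := by
    rw [real_inner_comm, aux_inner_grad]
  beta_reduce
  rw [e1, e2, e3, e4, e5]
  ring
end

section
/- Fix real numbers α, κ with 0 ≤ α·κ ≤ 1/2 and α > 0. Let η(x, y) := eˣ·sin y, c(x, y) := (eˣ·sin y + y, eˣ·cos y − x), and E := α·(∇η)·(c − α·κ·∇η) − div(c − α·κ·∇η) on ℝ². Then: (i) c = ∇η + curl ψ with ψ(x, y) := (x² + y²)/2; (ii) div c = 0 and Δη = 0 everywhere; (iii) E(x, y) = α·eˣ·((1 − α·κ)·eˣ + y·sin y − x·cos y) for all (x, y); and (iv) E(x, y)/2 > 0 for every (x, y) ∈ [0, 1]², so that the admissibility condition δ ≥ max{0, −2E} holds with artificial reaction δ ≡ 0 and the resulting reaction weight L = E/2 is strictly positive on the domain [0, 1]². -/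
/-- Partial derivative in the first variable. -/
noncomputable def pdx (f : ℝ × ℝ → ℝ) (p : ℝ × ℝ) : ℝ := deriv (fun t => f (t, p.2)) p.1
/-- Partial derivative in the second variable. -/
noncomputable def pdy (f : ℝ × ℝ → ℝ) (p : ℝ × ℝ) : ℝ := deriv (fun t => f (p.1, t)) p.2
/-- Gradient on `ℝ²`. -/
noncomputable def grad2 (f : ℝ × ℝ → ℝ) (p : ℝ × ℝ) : ℝ × ℝ := (pdx f p, pdy f p)
/-- Divergence on `ℝ²`. -/
noncomputable def div2 (c : ℝ × ℝ → ℝ × ℝ) (p : ℝ × ℝ) : ℝ :=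
  pdx (fun q => (c q).1) p + pdy (fun q => (c q).2) p
/-- `curl ψ := (∂ψ/∂y, −∂ψ/∂x)`, the rotated gradient of a scalar function. -/
noncomputable def curl2 (ψ : ℝ × ℝ → ℝ) (p : ℝ × ℝ) : ℝ × ℝ := (pdy ψ p, -pdx ψ p)
/-- Euclidean inner product on `ℝ²`. -/
def dot2 (u v : ℝ × ℝ) : ℝ := u.1 * v.1 + u.2 * v.2
/-- Laplacian on `ℝ²`. -/
noncomputable def lap2 (f : ℝ × ℝ → ℝ) (p : ℝ × ℝ) : ℝ :=
  pdx (fun q => pdx f q) p + pdy (fun q => pdy f q) p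

theorem pdx_eta : pdx (fun p => Real.exp p.1 * Real.sin p.2)
    = fun p => Real.exp p.1 * Real.sin p.2 := by
  funext p
  exact ((Real.hasDerivAt_exp p.1).mul_const (Real.sin p.2)).deriv

theorem pdy_eta : pdy (fun p => Real.exp p.1 * Real.sin p.2)
    = fun p => Real.exp p.1 * Real.cos p.2 := by
  funext p
  exact ((Real.hasDerivAt_sin p.2).const_mul (Real.exp p.1)).deriv

theorem pdx_lin (a k m : ℝ) (p : ℝ × ℝ) :
    pdx (fun p => a * (Real.exp p.1 * Real.sin p.2) + k * p.2 + m) p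
      = a * (Real.exp p.1 * Real.sin p.2) :=
  (((((Real.hasDerivAt_exp p.1).mul_const (Real.sin p.2)).const_mul a).add_const
    (k * p.2)).add_const m).deriv

theorem pdy_lin (a k m : ℝ) (p : ℝ × ℝ) :
    pdy (fun p => a * (Real.exp p.1 * Real.cos p.2) + k * p.1 + m) p
      = a * (Real.exp p.1 * (-Real.sin p.2)) :=
  (((((Real.hasDerivAt_cos p.2).const_mul (Real.exp p.1)).const_mul a).add_const
    (k * p.1)).add_const m).deriv

theorem div_fit (s : ℝ) (p : ℝ × ℝ) :
    div2 (fun p => (Real.exp p.1 * Real.sin p.2 + p.2, Real.exp p.1 * Real.cos p.2 - p.1)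
      - s • (Real.exp p.1 * Real.sin p.2, Real.exp p.1 * Real.cos p.2)) p = 0 := by
  have h1 := pdx_lin (1 - s) 1 0 p
  have h2 := pdy_lin (1 - s) (-1) 0 p
  have e1 : (fun p : ℝ × ℝ => ((Real.exp p.1 * Real.sin p.2 + p.2,
      Real.exp p.1 * Real.cos p.2 - p.1)
      - s • (Real.exp p.1 * Real.sin p.2, Real.exp p.1 * Real.cos p.2)).1)
      = fun p => (1 - s) * (Real.exp p.1 * Real.sin p.2) + 1 * p.2 + 0 := by
    funext p; simp; ring
  have e2 : (fun p : ℝ × ℝ => ((Real.exp p.1 * Real.sin p.2 + p.2,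
      Real.exp p.1 * Real.cos p.2 - p.1)
      - s • (Real.exp p.1 * Real.sin p.2, Real.exp p.1 * Real.cos p.2)).2)
      = fun p => (1 - s) * (Real.exp p.1 * Real.cos p.2) + (-1) * p.1 + 0 := by
    funext p; simp; ring
  unfold div2
  rw [e1, e2, h1, h2]
  ring

/-- Case 2 of the numerical study: the divergence-free field
`c = ∇(eˣ sin y) + curl((x²+y²)/2)` has harmonic potential `η = eˣ sin y`, and the
effective reaction `E` from the exponential fitting is strictly positive on
`[0,1]²`, so `δ ≡ 0` is admissible and `L = E/2 > 0` there. -/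
theorem stmt6 (α κ : ℝ) (hακ₀ : 0 ≤ α * κ) (hακ₁ : α * κ ≤ 1 / 2) (hα : 0 < α)
    (η : ℝ × ℝ → ℝ) (hη : η = fun p => Real.exp p.1 * Real.sin p.2)
    (c : ℝ × ℝ → ℝ × ℝ)
    (hc : c = fun p =>
      (Real.exp p.1 * Real.sin p.2 + p.2, Real.exp p.1 * Real.cos p.2 - p.1))
    (ψ : ℝ × ℝ → ℝ) (hψ : ψ = fun p => (p.1 ^ 2 + p.2 ^ 2) / 2)
    (b : ℝ × ℝ → ℝ × ℝ) (hb : b = fun p => c p - (α * κ) • grad2 η p)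
    (E : ℝ × ℝ → ℝ) (hE : E = fun p => α * dot2 (grad2 η p) (b p) - div2 b p)
    (δ : ℝ × ℝ → ℝ) (hδ : δ = fun _ => 0)
    (L : ℝ × ℝ → ℝ) (hL : L = fun p => δ p + E p / 2) :
    (∀ p : ℝ × ℝ, c p = grad2 η p + curl2 ψ p) ∧
    (∀ p : ℝ × ℝ, div2 c p = 0 ∧ lap2 η p = 0) ∧
    (∀ p : ℝ × ℝ, E p = α * Real.exp p.1 *
      ((1 - α * κ) * Real.exp p.1 + p.2 * Real.sin p.2 - p.1 * Real.cos p.2)) ∧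
    (∀ p : ℝ × ℝ, p ∈ Set.Icc ((0 : ℝ), (0 : ℝ)) ((1 : ℝ), (1 : ℝ)) →
      0 < E p / 2 ∧ δ p ≥ max 0 (-(2 * E p)) ∧ 0 < L p) := by
  have hg : ∀ p, grad2 η p = (Real.exp p.1 * Real.sin p.2, Real.exp p.1 * Real.cos p.2) := by
    intro p
    rw [hη]; unfold grad2; rw [pdx_eta, pdy_eta]
  have hb' : b = fun p => (Real.exp p.1 * Real.sin p.2 + p.2, Real.exp p.1 * Real.cos p.2 - p.1)
      - (α * κ) • (Real.exp p.1 * Real.sin p.2, Real.exp p.1 * Real.cos p.2) := by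
    rw [hb]; funext p; rw [hg, hc]
  have hEf : ∀ p : ℝ × ℝ, E p = α * Real.exp p.1 *
      ((1 - α * κ) * Real.exp p.1 + p.2 * Real.sin p.2 - p.1 * Real.cos p.2) := by
    intro p
    have hd : div2 b p = 0 := by rw [hb']; exact div_fit _ p
    rw [hE]
    simp only [hd]
    simp only [hg, hb', dot2, Prod.fst_sub, Prod.snd_sub, Prod.smul_fst, Prod.smul_snd,
      smul_eq_mul]
    linear_combination (α * (1 - α * κ) * Real.exp p.1 ^ 2) * Real.sin_sq_add_cos_sq p.2
  refine ⟨?_, ?_, hEf, ?_⟩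
  · intro p
    have hx : pdx ψ p = p.1 := by
      rw [hψ]
      refine ((((hasDerivAt_id p.1).pow 2).add_const (p.2 ^ 2)).div_const 2).deriv.trans ?_
      simp
    have hy : pdy ψ p = p.2 := by
      rw [hψ]
      refine ((((hasDerivAt_id p.2).pow 2).const_add (p.1 ^ 2)).div_const 2).deriv.trans ?_
      simp
    rw [hg, hc]
    simp [curl2, hx, hy, sub_eq_add_neg]
  · intro p
    constructor
    · have h := div_fit 0 p
      simp only [zero_smul, sub_zero] at h
      rw [hc]; exact h
    · have h2 := pdy_lin 1 0 0 p
      simp only [one_mul, zero_mul, add_zero] at h2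
      unfold lap2
      rw [hη]
      simp only [pdx_eta, pdy_eta]
      rw [h2]
      ring
  · rintro ⟨x, y⟩ ⟨⟨hx0, hy0⟩, ⟨hx1, hy1⟩⟩
    simp only at hx0 hy0 hx1 hy1
    have hpos : 0 < E (x, y) := by
      rw [hEf]
      have he := Real.quadratic_le_exp_of_nonneg hx0
      have hs : 0 ≤ y * Real.sin y := mul_nonneg hy0
        (Real.sin_nonneg_of_nonneg_of_le_pi hy0 (by linarith [Real.pi_gt_three]))
      have hcx : x * Real.cos y ≤ x := mul_le_of_le_one_right hx0 (Real.cos_le_one y)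
      have hk : 1 / 2 * Real.exp x ≤ (1 - α * κ) * Real.exp x :=
        mul_le_mul_of_nonneg_right (by linarith) (Real.exp_pos x).le
      refine mul_pos (mul_pos hα (Real.exp_pos _)) ?_
      simp only
      nlinarith [sq_nonneg (x - 1)]
    refine ⟨by linarith, ?_, ?_⟩
    · rw [hδ]
      exact max_le le_rfl (by linarith)
    · rw [hL, hδ]
      simp only
      linarith
end

section
/- Fix a dimension d ≥ 1 and real numbers α and κ > 0. Let η : ℝ^d → ℝ be twice continuously differentiable, let c : ℝ^d → ℝ^d be a continuously differentiable vector field, and let δ : ℝ^d → ℝ be continuous with δ(x) ≥ max{0, −2·E(x)} for all x, where ω := exp(−α·η), b := c − α·κ·∇η, E := α·(∇η)·b − div b, and L := δ + E/2. For a continuously differentiable compactly supported u : ℝ^d → ℝ define the weighted energy norm ‖u‖_ω := ( ∫_{ℝ^d} κ·ω·|∇u|² dx + ∫_{ℝ^d} L·ω·u² dx )^{1/2}, and for a continuously differentiable compactly supported w define the dual seminorm s(w) := sup over continuously differentiable compactly supported φ with ‖φ‖_ω ≠ 0 of ( −∫_{ℝ^d} ω·w·(b·∇φ) dx ) / ‖φ‖_ω.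 Then, provided s(w) < ∞, for all continuously differentiable compactly supported w, v : ℝ^d → ℝ one has ∫_{ℝ^d} [ κ·∇w·∇(ω·v) + (c·∇w)·ω·v + δ·w·ω·v ] dx ≤ 3·( ‖w‖_ω + s(w) )·‖v‖_ω. -/
open scoped RealInnerProductSpace
open MeasureTheory

lemma aux_grad_cont {d : ℕ} {n m : WithTop ℕ∞} {u : EuclideanSpace ℝ (Fin d) → ℝ}
    (hu : ContDiff ℝ n u) (h : m + 1 ≤ n) : ContDiff ℝ m (fun x => gradient u x) := by
  have h1 : ContDiff ℝ m (fun x => fderiv ℝ u x) := hu.fderiv_right h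
  exact (InnerProductSpace.toDual ℝ (EuclideanSpace ℝ (Fin d))).symm.contDiff.comp h1

lemma aux_int {d : ℕ} {u f : EuclideanSpace ℝ (Fin d) → ℝ}
    (hu : HasCompactSupport u) (hf : Continuous f)
    (h : ∀ x, u x = 0 → gradient u x = 0 → f x = 0) : Integrable f := by
  refine hf.integrable_of_hasCompactSupport (HasCompactSupport.intro hu ?_)
  intro x hx
  refine h x (image_eq_zero_of_notMem_tsupport hx) ?_
  have h1 : fderiv ℝ u x = 0 := by
    by_contra hne
    exact hx (support_fderiv_subset ℝ hne)
  simp [gradient, h1]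

lemma aux_ibp {d : ℕ} {f : EuclideanSpace ℝ (Fin d) → ℝ}
    {b : EuclideanSpace ℝ (Fin d) → EuclideanSpace ℝ (Fin d)}
    (hf : ContDiff ℝ 1 f) (hfc : HasCompactSupport f) (hb : ContDiff ℝ 1 b) :
    ∫ x, f x * vdiv b x = - ∫ x, fderiv ℝ f x (b x) := by
  have hbi : ∀ i, ContDiff ℝ 1 (fun y => b y i) := fun i => by fun_prop
  have hbd : ∀ i x, fderiv ℝ (fun y => b y i) x (EuclideanSpace.single i 1)
      = fderiv ℝ b x (EuclideanSpace.single i 1) i := by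
    intro i x
    have h1 : HasFDerivAt b (fderiv ℝ b x) x :=
      (hb.differentiable one_ne_zero x).hasFDerivAt
    have h2 := (EuclideanSpace.proj i : EuclideanSpace ℝ (Fin d) →L[ℝ] ℝ).hasFDerivAt.comp x h1
    have h3 : fderiv ℝ (fun y => b y i) x = _ := h2.fderiv
    rw [h3]; rfl
  have hsum : ∀ x, fderiv ℝ f x (b x)
      = ∑ i, fderiv ℝ f x (EuclideanSpace.single i 1) * b x i := by
    intro x
    have : b x = ∑ i, b x i • EuclideanSpace.single i (1 : ℝ) := by
      ext j
      simp [Pi.single_apply]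
    conv_lhs => rw [this]
    simp [mul_comm]
  have hdf : Continuous (fun x => fderiv ℝ f x) := hf.continuous_fderiv one_ne_zero
  have hdb : ∀ i, Continuous (fun x => fderiv ℝ (fun y => b y i) x) :=
    fun i => (hbi i).continuous_fderiv one_ne_zero
  have i1 : ∀ i, Integrable
      (fun x => fderiv ℝ f x (EuclideanSpace.single i 1) * b x i) := by
    intro i
    refine aux_int hfc ?_ ?_
    · have := (hbi i).continuous
      fun_prop
    · intro x _ h
      rw [← inner_gradient_left, h]; simp
  have i2 : ∀ i, Integrable
      (fun x => f x * fderiv ℝ (fun y => b y i) x (EuclideanSpace.single i 1)) := by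
    intro i
    refine aux_int hfc ?_ ?_
    · have := hdb i
      have := hf.continuous
      fun_prop
    · intro x h _
      simp [h]
  have key : ∀ i, ∫ x, f x * fderiv ℝ (fun y => b y i) x (EuclideanSpace.single i 1)
      = - ∫ x, fderiv ℝ f x (EuclideanSpace.single i 1) * b x i := by
    intro i
    refine integral_mul_fderiv_eq_neg_fderiv_mul_of_integrable (i1 i) (i2 i) ?_ ?_ ?_
    · refine aux_int hfc ?_ ?_
      · exact hf.continuous.mul (hbi i).continuous
      · intro x h _
        simp [h]
    · exact fun x _ => hf.differentiable one_ne_zero x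
    · exact fun x _ => (hbi i).differentiable one_ne_zero x
  simp_rw [hsum, vdiv, Finset.mul_sum, ← hbd]
  rw [integral_finsetSum _ (fun i _ => i1 i), integral_finsetSum _ (fun i _ => i2 i),
    ← Finset.sum_neg_distrib]
  exact Finset.sum_congr rfl fun i _ => key i

/-- Continuity estimate of Lemma 3.1 in its interior (compactly supported,
conforming) form with explicit constant `3`:
`a_reac(w, ωv) ≤ 3 (‖w‖_ω + s(w)) ‖v‖_ω`, where `‖·‖_ω` is the weighted energy
norm and `s` the dual seminorm of the fitted convective term. -/
theorem stmt10 {d : ℕ} (hd : 1 ≤ d) (α κ : ℝ) (hκ : 0 < κ)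
    (η : EuclideanSpace ℝ (Fin d) → ℝ) (hη : ContDiff ℝ 2 η)
    (c : EuclideanSpace ℝ (Fin d) → EuclideanSpace ℝ (Fin d)) (hc : ContDiff ℝ 1 c)
    (δ : EuclideanSpace ℝ (Fin d) → ℝ) (hδc : Continuous δ)
    (ω : EuclideanSpace ℝ (Fin d) → ℝ) (hω : ω = fun x => Real.exp (-(α * η x)))
    (b : EuclideanSpace ℝ (Fin d) → EuclideanSpace ℝ (Fin d))
    (hb : b = fun x => c x - (α * κ) • gradient η x)
    (Ef : EuclideanSpace ℝ (Fin d) → ℝ)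
    (hEf : Ef = fun x => α * ⟪gradient η x, b x⟫ - vdiv b x)
    (hδ : ∀ x, δ x ≥ max 0 (-(2 * Ef x)))
    (L : EuclideanSpace ℝ (Fin d) → ℝ) (hL : L = fun x => δ x + Ef x / 2)
    (Nω : (EuclideanSpace ℝ (Fin d) → ℝ) → ℝ)
    (hNω : Nω = fun u => Real.sqrt
      ((∫ x : EuclideanSpace ℝ (Fin d), κ * ω x * ‖gradient u x‖ ^ 2) +
        ∫ x : EuclideanSpace ℝ (Fin d), L x * ω x * u x ^ 2))
    (S : (EuclideanSpace ℝ (Fin d) → ℝ) → Set ℝ)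
    (hS : S = fun w => {r : ℝ | ∃ φ : EuclideanSpace ℝ (Fin d) → ℝ,
      ContDiff ℝ 1 φ ∧ HasCompactSupport φ ∧ Nω φ ≠ 0 ∧
      r = (-∫ x : EuclideanSpace ℝ (Fin d), ω x * w x * ⟪b x, gradient φ x⟫) / Nω φ})
    (s : (EuclideanSpace ℝ (Fin d) → ℝ) → ℝ) (hs : s = fun w => sSup (S w)) :
    ∀ w v : EuclideanSpace ℝ (Fin d) → ℝ,
      ContDiff ℝ 1 w → HasCompactSupport w → ContDiff ℝ 1 v → HasCompactSupport v →
      BddAbove (S w) →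
      (∫ x : EuclideanSpace ℝ (Fin d),
          (κ * ⟪gradient w x, gradient (fun y => ω y * v y) x⟫ +
            ⟪c x, gradient w x⟫ * (ω x * v x) + δ x * w x * ω x * v x)) ≤
        3 * (Nω w + s w) * Nω v := by
  intro w v hw hwc hv hvc hbdd
  have hωC : ContDiff ℝ 1 ω := by
    have := hη.of_le (m := 1) (by norm_num)
    rw [hω]; fun_prop
  have hωpos : ∀ x, 0 < ω x := fun x => by rw [hω]; exact Real.exp_pos _
  have hgη : ContDiff ℝ 1 (fun x => gradient η x) := aux_grad_cont hη (by norm_num)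
  have hbC : ContDiff ℝ 1 b := by rw [hb]; fun_prop
  have hgw : Continuous (fun x => gradient w x) := 
    (aux_grad_cont (m := 0) hw (by norm_num)).continuous
  have hgv : Continuous (fun x => gradient v x) := 
    (aux_grad_cont (m := 0) hv (by norm_num)).continuous
  have hωc := hωC.continuous
  have hbc := hbC.continuous
  have hηc := hgη.continuous
  have hwc' := hw.continuous
  have hvc' := hv.continuous
  have hdivc : Continuous (fun x => vdiv b x) := by
    have := hbC.continuous_fderiv one_ne_zero
    unfold vdiv
    fun_prop
  have hEc : Continuous Ef := by rw [hEf]; fun_prop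
  have hLc : Continuous L := by rw [hL]; fun_prop
  have hδ0 : ∀ x, 0 ≤ δ x := fun x => le_trans (le_max_left _ _) (hδ x)
  have hδE : ∀ x, 0 ≤ δ x + Ef x := fun x => by
    have := le_trans (le_max_right _ _) (hδ x)
    linarith [hδ0 x]
  have hLx : ∀ x, L x = δ x + Ef x / 2 := fun x => by rw [hL]
  have hL0 : ∀ x, 0 ≤ L x := fun x => by rw [hLx]; linarith [hδ0 x, hδE x]
  -- derivatives of the weight
  have hgω : ∀ x y, fderiv ℝ ω x y = -(α * ω x * ⟪gradient η x, y⟫) := by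
    intro x y
    have h1 : HasFDerivAt η (fderiv ℝ η x) x :=
      (hη.differentiable two_ne_zero x).hasFDerivAt
    have h2 := ((h1.const_mul α).neg).exp
    have h3 : HasFDerivAt ω (Real.exp (-(α * η x)) • -(α • fderiv ℝ η x)) x := by
      rw [hω]; exact h2
    rw [h3.fderiv, inner_gradient_left, hω]
    simp
    ring
  have hdw : ∀ x, DifferentiableAt ℝ w x := hw.differentiable one_ne_zero
  have hdv : ∀ x, DifferentiableAt ℝ v x := hv.differentiable one_ne_zero
  have hdω : ∀ x, DifferentiableAt ℝ ω x := hωC.differentiable one_ne_zero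
  have hωv : ∀ x y, fderiv ℝ (fun y => ω y * v y) x y
      = ω x * fderiv ℝ v x y + v x * fderiv ℝ ω x y := by
    intro x y
    rw [fderiv_fun_mul (hdω x) (hdv x)]
    simp
  have hwωv : ∀ x y, fderiv ℝ (fun y => w y * (ω y * v y)) x y
      = w x * (ω x * fderiv ℝ v x y + v x * fderiv ℝ ω x y)
        + ω x * v x * fderiv ℝ w x y := by
    intro x y
    rw [fderiv_fun_mul (d := fun y => ω y * v y) (hdw x) ((hdω x).mul (hdv x))]
    simp [← hωv]
  -- integration by parts
  have hibp := aux_ibp (f := fun y => w y * (ω y * v y)) (b := b) (by fun_prop)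
    (hwc.mul_right) hbC
  have hI1 : Integrable (fun x => κ * ω x * ⟪gradient w x, gradient v x⟫
      + (δ x + Ef x) * ω x * (w x * v x)) := by
    refine aux_int hwc (by fun_prop) ?_
    intro x h1 h2
    simp [h1, h2]
  have hI2 : Integrable (fun x => ω x * w x * ⟪b x, gradient v x⟫) := by
    refine aux_int hwc (by fun_prop) ?_
    intro x h1 h2
    simp [h1]
  have hI3 : Integrable (fun x => w x * (ω x * v x) * vdiv b x) := by
    refine aux_int hwc (by fun_prop) ?_
    intro x h1 h2
    simp [h1]
  have hI4 : Integrable (fun x => fderiv ℝ (fun y => w y * (ω y * v y)) x (b x)) := by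
    have hC : ContDiff ℝ 1 (fun y => w y * (ω y * v y)) := by fun_prop
    have := hC.continuous_fderiv one_ne_zero
    refine aux_int (hwc.mul_right (f' := fun y => ω y * v y)) (by fun_prop) ?_
    intro x h1 h2
    rw [← inner_gradient_left]
    erw [h2]
    simp
  have hpt : ∀ x, κ * ⟪gradient w x, gradient (fun y => ω y * v y) x⟫ +
            ⟪c x, gradient w x⟫ * (ω x * v x) + δ x * w x * ω x * v x
      = (κ * ω x * ⟪gradient w x, gradient v x⟫ + (δ x + Ef x) * ω x * (w x * v x))
        - ω x * w x * ⟪b x, gradient v x⟫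
        + (w x * (ω x * v x) * vdiv b x
          + fderiv ℝ (fun y => w y * (ω y * v y)) x (b x)) := by
    intro x
    have e1 : ⟪gradient w x, gradient (fun y => ω y * v y) x⟫
        = ω x * ⟪gradient w x, gradient v x⟫
          - v x * (α * ω x * ⟪gradient η x, gradient w x⟫) := by
      rw [real_inner_comm, inner_gradient_left, hωv, hgω, ← inner_gradient_left,
        real_inner_comm (gradient w x) (gradient v x)]
      ring
    have e2 : c x = b x + (α * κ) • gradient η x := by rw [hb]; simp
    have e3 : Ef x = α * ⟪gradient η x, b x⟫ - vdiv b x := by rw [hEf]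
    rw [hwωv, hgω, e1, e2, e3, inner_add_left, real_inner_smul_left,
      ← inner_gradient_left, ← inner_gradient_left, real_inner_comm (b x) (gradient w x),
      real_inner_comm (b x) (gradient v x)]
    ring
  have hsplit : (∫ x : EuclideanSpace ℝ (Fin d),
          (κ * ⟪gradient w x, gradient (fun y => ω y * v y) x⟫ +
            ⟪c x, gradient w x⟫ * (ω x * v x) + δ x * w x * ω x * v x))
      = (∫ x, (κ * ω x * ⟪gradient w x, gradient v x⟫ + (δ x + Ef x) * ω x * (w x * v x)))
        - ∫ x, ω x * w x * ⟪b x, gradient v x⟫ := by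
    simp_rw [hpt]
    have s1 := integral_add (hI1.sub hI2) (hI3.add hI4)
    simp only [Pi.add_apply, Pi.sub_apply] at s1
    rw [s1, integral_sub hI1 hI2,
      integral_add hI3 hI4, hibp]
    ring
  rw [hsplit]
  -- energies
  have hA : ∀ u : EuclideanSpace ℝ (Fin d) → ℝ, ContDiff ℝ 1 u → HasCompactSupport u →
      Integrable (fun x => κ * ω x * ‖gradient u x‖ ^ 2) := by
    intro u hu huc
    have := (aux_grad_cont (m := 0) hu (by norm_num)).continuous
    refine aux_int huc (by fun_prop) ?_
    intro x h1 h2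
    simp [h2]
  have hB : ∀ u : EuclideanSpace ℝ (Fin d) → ℝ, ContDiff ℝ 1 u → HasCompactSupport u →
      Integrable (fun x => L x * ω x * u x ^ 2) := by
    intro u hu huc
    have := hu.continuous
    refine aux_int huc (by fun_prop) ?_
    intro x h1 h2
    simp [h1]
  have hA0 : ∀ u : EuclideanSpace ℝ (Fin d) → ℝ,
      0 ≤ ∫ x, κ * ω x * ‖gradient u x‖ ^ 2 := fun u =>
    integral_nonneg fun x => by have := hωpos x; positivity
  have hB0 : ∀ u : EuclideanSpace ℝ (Fin d) → ℝ,
      0 ≤ ∫ x, L x * ω x * u x ^ 2 := fun u =>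
    integral_nonneg fun x => by have := hωpos x; have := hL0 x; positivity
  have hN0 : ∀ u, 0 ≤ Nω u := fun u => by rw [hNω]; exact Real.sqrt_nonneg _
  have hNsq : ∀ u, Nω u ^ 2 = (∫ x, κ * ω x * ‖gradient u x‖ ^ 2)
      + ∫ x, L x * ω x * u x ^ 2 := fun u => by
    rw [hNω]; exact Real.sq_sqrt (add_nonneg (hA0 u) (hB0 u))
  -- Cauchy-Schwarz
  have hCS : (∫ x, (κ * ω x * ⟪gradient w x, gradient v x⟫
      + (δ x + Ef x) * ω x * (w x * v x))) ≤ 2 * Nω w * Nω v := by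
    set J := ∫ x, (κ * ω x * ⟪gradient w x, gradient v x⟫
      + (δ x + Ef x) * ω x * (w x * v x)) with hJ
    have hq : ∀ t : ℝ, 0 ≤ (2 * Nω w ^ 2) * (t * t) + (-(2 * J)) * t + 2 * Nω v ^ 2 := by
      intro t
      have hI : (2 * Nω w ^ 2) * (t * t) + (-(2 * J)) * t + 2 * Nω v ^ 2
          = ∫ x, ((2 * (t * t)) * (κ * ω x * ‖gradient w x‖ ^ 2 + L x * ω x * w x ^ 2)
            + (-(2 * t)) * (κ * ω x * ⟪gradient w x, gradient v x⟫
              + (δ x + Ef x) * ω x * (w x * v x))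
            + 2 * (κ * ω x * ‖gradient v x‖ ^ 2 + L x * ω x * v x ^ 2)) := by
        have k1 := ((hA w hw hwc).add (hB w hw hwc)).const_mul (2 * (t * t))
        have k2 := hI1.const_mul (-(2 * t))
        have k3 := ((hA v hv hvc).add (hB v hv hvc)).const_mul 2
        have s1 := integral_add (k1.add k2) k3
        have s2 := integral_add k1 k2
        simp only [Pi.add_apply] at s1 s2
        rw [s1, s2, integral_const_mul, integral_const_mul, integral_const_mul,
          integral_add (hA w hw hwc) (hB w hw hwc), integral_add (hA v hv hvc) (hB v hv hvc),
          ← hNsq, ← hNsq, ← hJ]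
        ring
      rw [hI]
      refine integral_nonneg fun x => ?_
      have h1 : 0 ≤ ‖t • gradient w x - gradient v x‖ ^ 2 := by positivity
      rw [norm_sub_sq_real, real_inner_smul_left, norm_smul, mul_pow, Real.norm_eq_abs,
        sq_abs] at h1
      have hω' := hωpos x
      have h2 : 0 ≤ κ * ω x * ((t ^ 2 * ‖gradient w x‖ ^ 2
          - 2 * (t * ⟪gradient w x, gradient v x⟫) + ‖gradient v x‖ ^ 2)
          + t ^ 2 * ‖gradient w x‖ ^ 2 + ‖gradient v x‖ ^ 2) := by positivity
      have h3 : 0 ≤ ω x * ((δ x + Ef x) * (t * w x - v x) ^ 2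
          + δ x * (t ^ 2 * w x ^ 2 + v x ^ 2)) := by
        have := hδE x
        have := hδ0 x
        positivity
      simp only [Pi.zero_apply]
      rw [hLx]
      linarith
    have hd := discrim_le_zero hq
    unfold discrim at hd
    refine le_of_sq_le_sq ?_ ?_
    · nlinarith
    · have := hN0 w; have := hN0 v; positivity
  by_cases hv0 : Nω v = 0
  · have hz : (∫ x, κ * ω x * ‖gradient v x‖ ^ 2) = 0 := by
      have h1 := hNsq v
      rw [hv0] at h1
      linarith [hA0 v, hB0 v]
    rw [integral_eq_zero_iff_of_nonneg
      (fun x => by have := hωpos x; simp only [Pi.zero_apply]; positivity) (hA v hv hvc)] at hz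
    have hz' := (Continuous.ae_eq_iff_eq volume (by fun_prop) continuous_zero).1 hz
    have hg0 : ∀ x, gradient v x = 0 := fun x => by
      have h1 := congrFun hz' x
      simpa [hκ.ne', (hωpos x).ne'] using h1
    simp only [hv0, mul_zero] at hCS ⊢
    simp only [hg0, inner_zero_right, mul_zero, integral_zero, sub_zero] at hCS ⊢
    exact hCS
  · have hvpos : 0 < Nω v := lt_of_le_of_ne (hN0 v) (Ne.symm hv0)
    have hgneg : ∀ x, gradient (fun y => - v y) x = - gradient v x := fun x => by
      simp [gradient, fderiv_fun_neg]
    have hNneg : Nω (fun y => - v y) = Nω v := by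
      rw [hNω]; simp [hgneg]
    have m1 : (-∫ x, ω x * w x * ⟪b x, gradient v x⟫) / Nω v ≤ s w := by
      rw [hs]
      refine le_csSup hbdd ?_
      rw [hS]
      exact ⟨v, hv, hvc, hv0, rfl⟩
    have m2 : (∫ x, ω x * w x * ⟪b x, gradient v x⟫) / Nω v ≤ s w := by
      rw [hs]
      refine le_csSup hbdd ?_
      rw [hS]
      refine ⟨fun y => - v y, hv.neg, hvc.neg, by rw [hNneg]; exact hv0, ?_⟩
      rw [hNneg]
      simp [hgneg, integral_neg]
    rw [div_le_iff₀ hvpos] at m1 m2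
    have := mul_nonneg (hN0 w) (hN0 v)
    linarith
end
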